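/- arXiv:2509.18837 — 2 statements merged into one kernel-verified Lean document; each statement's English description precedes it below -/
import Mathlib

section
/- For H in (0,1), the identity (1/(2H)) + ∫₁^∞ (u^(H-1/2) - (u-1)^(H-1/2))² du = Γ(H+1/2)² / (2H sin(πH) Γ(2H)) holds. -/
open Real MeasureTheory Set

/-! Write `a = H - 1/2` and `v = u - 1`. The product `(u^(a+1) - v^(a+1)) * (u^a - v^a)` has
derivative `(2a+1) (u^a - v^a)^2 - a (u v)^(a-1)`, and adding `v^a u^(a-1)` trades the last term,
which need not be integrable near `u = 1`, for `-(1-a) v^a u^(a-2)`. The resulting function tends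
to `1` as `u → 1` and to `0` at infinity, so
`(2a+1) ∫ (u^a - v^a)^2 = (1-a) ∫ v^a u^(a-2) - 1 = (1-a) B(a+1, 1-2a) - 1`,
the beta integral appearing after `x = 1 - 1/u`. Euler's reflection formula at `a` and `2a` turns
the beta value into a product of Gamma values over a cosine. -/

open Filter Topology Asymptotics ProbabilityTheory

section BetaIntegral

variable {p q : ℝ}

lemma lintegral_Ioo_rpow_mul_one_sub_rpow (hp : 0 < p) (hq : 0 < q) :
    ∫⁻ x in Ioo (0 : ℝ) 1, ENNReal.ofReal (x ^ (p - 1) * (1 - x) ^ (q - 1)) =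
      ENNReal.ofReal (beta p q) := by
  have hB : 0 < beta p q := beta_pos hp hq
  have hpdf (x : ℝ) : ENNReal.ofReal (x ^ (p - 1) * (1 - x) ^ (q - 1)) =
      ENNReal.ofReal (beta p q) *
        ENNReal.ofReal (1 / beta p q * x ^ (p - 1) * (1 - x) ^ (q - 1)) := by
    rw [← ENNReal.ofReal_mul hB.le]
    congr 1
    field_simp
  simp_rw [hpdf]
  rw [lintegral_const_mul _ (by fun_prop), ← lintegral_betaPDF, lintegral_betaPDF_eq_one hp hq,
    mul_one]

lemma image_one_sub_inv_Ioi_one : (fun u : ℝ ↦ 1 - u⁻¹) '' Ioi 1 = Ioo 0 1 := by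
  rw [← image_image (fun x : ℝ ↦ 1 - x) Inv.inv, image_inv_eq_inv, inv_Ioi₀ one_pos]
  simp

lemma lintegral_Ioi_sub_one_rpow_mul_rpow (hp : 0 < p) (hq : 0 < q) :
    ∫⁻ u in Ioi (1 : ℝ), ENNReal.ofReal ((u - 1) ^ (p - 1) * u ^ (-(p + q))) =
      ENNReal.ofReal (beta p q) := by
  have hderiv : ∀ u ∈ Ioi (1 : ℝ),
      HasDerivWithinAt (fun u : ℝ ↦ 1 - u⁻¹) ((u ^ 2)⁻¹) (Ioi 1) u := fun u hu ↦ by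
    simpa using ((hasDerivAt_inv (zero_lt_one.trans hu).ne').const_sub (1 : ℝ)).hasDerivWithinAt
  have hmono : MonotoneOn (fun u : ℝ ↦ 1 - u⁻¹) (Ioi 1) := fun u hu w _ huw ↦
    sub_le_sub_left (inv_anti₀ (zero_lt_one.trans hu) huw) 1
  rw [← lintegral_Ioo_rpow_mul_one_sub_rpow hp hq, ← image_one_sub_inv_Ioi_one,
    lintegral_image_eq_lintegral_deriv_mul_of_monotoneOn measurableSet_Ioi hderiv hmono]
  refine setLIntegral_congr_fun measurableSet_Ioi fun u (hu : 1 < u) ↦ ?_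
  have hu0 : 0 < u := zero_lt_one.trans hu
  have hsub : 1 - u⁻¹ = (u - 1) / u := by field_simp
  have hpow : u ^ (-(p + q)) = (u ^ 2)⁻¹ * (u ^ (p - 1))⁻¹ * (u ^ (q - 1))⁻¹ := by
    rw [← rpow_natCast, ← rpow_neg hu0.le, ← rpow_neg hu0.le, ← rpow_neg hu0.le, ← rpow_add hu0,
      ← rpow_add hu0]
    congr 1
    push_cast
    ring
  rw [← ENNReal.ofReal_mul (by positivity), sub_sub_cancel, hsub,
    div_rpow (sub_pos.2 hu).le hu0.le, inv_rpow hu0.le, hpow]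
  congr 1
  ring

lemma integrableOn_Ioi_sub_one_rpow_mul_rpow (hp : 0 < p) (hq : 0 < q) :
    IntegrableOn (fun u : ℝ ↦ (u - 1) ^ (p - 1) * u ^ (-(p + q))) (Ioi 1) := by
  rw [IntegrableOn, ← lintegral_ofReal_ne_top_iff_integrable (by fun_prop),
    lintegral_Ioi_sub_one_rpow_mul_rpow hp hq]
  · exact ENNReal.ofReal_ne_top
  · filter_upwards [ae_restrict_mem measurableSet_Ioi] with u (hu : 1 < u)
    have := sub_pos.2 hu
    positivity

lemma integral_Ioi_sub_one_rpow_mul_rpow (hp : 0 < p) (hq : 0 < q) :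
    ∫ u in Ioi (1 : ℝ), (u - 1) ^ (p - 1) * u ^ (-(p + q)) = beta p q := by
  rw [integral_eq_lintegral_of_nonneg_ae, lintegral_Ioi_sub_one_rpow_mul_rpow hp hq,
    ENNReal.toReal_ofReal (beta_pos hp hq).le]
  · filter_upwards [ae_restrict_mem measurableSet_Ioi] with u (hu : 1 < u)
    have := sub_pos.2 hu
    positivity
  · fun_prop

end BetaIntegral

section Reflection

-- At a nonzero integer both sides take the junk value `0`.
lemma Gamma_one_add_mul_Gamma_one_sub (x : ℝ) :
    Real.Gamma (1 + x) * Real.Gamma (1 - x) = (sinc (π * x))⁻¹ := by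
  rcases eq_or_ne x 0 with rfl | hx
  · simp
  · rw [add_comm, Real.Gamma_add_one hx, mul_assoc, Real.Gamma_mul_Gamma_one_sub,
      sinc_of_ne_zero (mul_ne_zero pi_ne_zero hx), inv_div, mul_div_assoc']
    ring

lemma sinc_two_mul (x : ℝ) : sinc (2 * x) = sinc x * cos x := by
  rcases eq_or_ne x 0 with rfl | hx
  · simp
  · rw [sinc_of_ne_zero hx, sinc_of_ne_zero (mul_ne_zero two_ne_zero hx), sin_two_mul]
    field_simp

lemma Gamma_one_add_two_mul_mul_Gamma_one_sub_two_mul_mul_cos {x : ℝ} (hx : cos (π * x) ≠ 0) :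
    Real.Gamma (1 + 2 * x) * Real.Gamma (1 - 2 * x) * cos (π * x) =
      Real.Gamma (1 + x) * Real.Gamma (1 - x) := by
  rw [Gamma_one_add_mul_Gamma_one_sub, Gamma_one_add_mul_Gamma_one_sub, mul_left_comm,
    sinc_two_mul, mul_inv, inv_mul_cancel_right₀ hx]

lemma one_sub_mul_beta_add_one_one_sub_two_mul {x : ℝ} (hx : -(1 / 2) < x) (hx' : x < 1 / 2) :
    (1 - x) * beta (x + 1) (1 - 2 * x) =
      Real.Gamma (x + 1) ^ 2 / (cos (π * x) * Real.Gamma (2 * x + 1)) := by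
  have hcos : 0 < cos (π * x) :=
    cos_pos_of_mem_Ioo ⟨by nlinarith [pi_pos], by nlinarith [pi_pos]⟩
  have hΓ : 0 < Real.Gamma (2 * x + 1) := Gamma_pos_of_pos (by linarith)
  have hΓ' : 0 < Real.Gamma (1 - x) := Gamma_pos_of_pos (by linarith)
  have hx1 : 1 - x ≠ 0 := by linarith
  have hreflection := Gamma_one_add_two_mul_mul_Gamma_one_sub_two_mul_mul_cos hcos.ne'
  rw [add_comm 1 (2 * x), add_comm 1 x] at hreflection
  rw [beta, show x + 1 + (1 - 2 * x) = 1 - x + 1 by ring, Real.Gamma_add_one hx1,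
    eq_div_iff (by positivity)]
  calc
    _ = Real.Gamma (x + 1) *
        (Real.Gamma (2 * x + 1) * Real.Gamma (1 - 2 * x) * cos (π * x)) / Real.Gamma (1 - x) := by
      field_simp
    _ = Real.Gamma (x + 1) ^ 2 := by
      rw [hreflection]
      field_simp

end Reflection

section Increment

lemma rpow_two_mul {x : ℝ} (hx : 0 ≤ x) (p : ℝ) : x ^ (2 * p) = (x ^ p) ^ 2 := by
  rw [mul_comm, rpow_mul hx, rpow_two]

lemma isBigO_rpow_sub_sub_rpow_atTop (p c : ℝ) :
    (fun u : ℝ ↦ u ^ p - (u - c) ^ p) =O[atTop] fun u ↦ u ^ (p - 1) := by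
  have hderiv : HasDerivAt (fun y : ℝ ↦ (1 - c * y) ^ p) (-c * p * (1 - c * 0) ^ (p - 1)) 0 := by
    simpa using (((hasDerivAt_id (0 : ℝ)).const_mul c).const_sub 1).rpow_const (p := p)
      (Or.inl (by simp))
  have hinv := (hderiv.isBigO_sub.comp_tendsto tendsto_inv_atTop_zero).neg_left
  refine ((isBigO_refl (fun u : ℝ ↦ u ^ p) atTop).mul hinv).congr' ?_ ?_
  · filter_upwards [eventually_gt_atTop 0, eventually_ge_atTop c] with u hu0 huc
    have hsub : 1 - c * u⁻¹ = (u - c) / u := by field_simp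
    simp only [Function.comp_apply, hsub, div_rpow (sub_nonneg.2 huc) hu0.le, mul_zero, sub_zero,
      one_rpow]
    field_simp
    ring
  · filter_upwards [eventually_gt_atTop 0] with u hu0
    simp [rpow_sub_one hu0.ne', div_eq_mul_inv]

lemma isBigO_sub_rpow_atTop (p c : ℝ) :
    (fun u : ℝ ↦ (u - c) ^ p) =O[atTop] fun u ↦ u ^ p := by
  have hle : (fun u : ℝ ↦ u ^ (p - 1)) =O[atTop] fun u ↦ u ^ p := by
    refine .of_norm_eventuallyLE ?_
    filter_upwards [eventually_ge_atTop 1] with u hu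
    rw [norm_of_nonneg (by positivity)]
    exact rpow_le_rpow_of_exponent_le hu (by linarith)
  simpa using (isBigO_refl (fun u : ℝ ↦ u ^ p) atTop).sub
    ((isBigO_rpow_sub_sub_rpow_atTop p c).trans hle)

variable {a : ℝ}

lemma intervalIntegrable_sq_rpow_sub_sub_one_rpow (ha : -(1 / 2) < a) {b : ℝ} (hb : 1 ≤ b) :
    IntervalIntegrable (fun u : ℝ ↦ (u ^ a - (u - 1) ^ a) ^ 2) volume 1 b := by
  have hpos : ∀ u ∈ uIcc 1 b, 0 < u := fun u hu ↦ by
    rw [uIcc_of_le hb] at hu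
    exact zero_lt_one.trans_le hu.1
  have hcont (s : ℝ) : ContinuousOn (fun u : ℝ ↦ u ^ s) (uIcc 1 b) := fun u hu ↦
    (continuousAt_rpow_const u s (Or.inl (hpos u hu).ne')).continuousWithinAt
  have hsing {s : ℝ} (hs : -1 < s) : IntervalIntegrable (fun u : ℝ ↦ (u - 1) ^ s) volume 1 b := by
    simpa using
      (intervalIntegral.intervalIntegrable_rpow' hs (a := 0) (b := b - 1)).comp_sub_right 1
  refine (((hcont (2 * a)).intervalIntegrable.sub
    (((hsing (s := a) (by linarith)).continuousOn_mul (hcont a)).const_mul 2)).add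
      (hsing (s := 2 * a) (by linarith))).congr fun u hu ↦ ?_
  rw [uIoc_of_le hb] at hu
  rw [rpow_two_mul (zero_lt_one.trans hu.1).le, rpow_two_mul (sub_pos.2 hu.1).le]
  ring

lemma isBigO_sq_rpow_sub_sub_one_rpow_atTop (a : ℝ) :
    (fun u : ℝ ↦ (u ^ a - (u - 1) ^ a) ^ 2) =O[atTop] fun u ↦ u ^ (2 * a - 2) := by
  refine ((isBigO_rpow_sub_sub_rpow_atTop a 1).pow 2).congr' .rfl ?_
  filter_upwards [eventually_gt_atTop 0] with u hu
  rw [← rpow_two_mul hu.le]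
  ring_nf

lemma integrableOn_sq_rpow_sub_sub_one_rpow (ha : -(1 / 2) < a) (ha' : a < 1 / 2) :
    IntegrableOn (fun u : ℝ ↦ (u ^ a - (u - 1) ^ a) ^ 2) (Ioi 1) := by
  have hnear := intervalIntegrable_sq_rpow_sub_sub_one_rpow ha one_le_two
  rw [intervalIntegrable_iff_integrableOn_Ioc_of_le one_le_two] at hnear
  have hcont : ContinuousOn (fun u : ℝ ↦ (u ^ a - (u - 1) ^ a) ^ 2) (Ici 2) := by
    intro u (hu : 2 ≤ u)
    have hu0 : u ≠ 0 := by linarith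
    have hv0 : u - 1 ≠ 0 := by linarith
    fun_prop (disch := left; assumption)
  have hfar : IntegrableOn (fun u : ℝ ↦ (u ^ a - (u - 1) ^ a) ^ 2) (Ici 2) :=
    (hcont.locallyIntegrableOn measurableSet_Ici).integrableOn_of_isBigO_atTop
      (isBigO_sq_rpow_sub_sub_one_rpow_atTop a)
      (integrableAtFilter_rpow_atTop_iff.2 (by linarith))
  rw [← Ioc_union_Ici_eq_Ioi one_lt_two]
  exact hnear.union hfar

/-- A primitive of `(2a+1) (u^a - v^a)^2 - (1-a) v^a u^(a-2)` on `(1, ∞)`, where `v = u - 1`.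
It is written with positive powers of `v` only, so that it is continuous at `u = 1`. -/
noncomputable def incrementPrimitive (a u : ℝ) : ℝ :=
  u ^ (2 * a + 1) + (u - 1) ^ (2 * a + 1) - (2 * u + 1) * (u - 1) ^ (a + 1) * u ^ (a - 1)

lemma incrementPrimitive_one (ha : -(1 / 2) < a) : incrementPrimitive a 1 = 1 := by
  simp [incrementPrimitive, zero_rpow (show 2 * a + 1 ≠ 0 by linarith),
    zero_rpow (show a + 1 ≠ 0 by linarith)]

lemma continuousAt_incrementPrimitive_one (ha : -(1 / 2) < a) :
    ContinuousAt (incrementPrimitive a) 1 := by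
  unfold incrementPrimitive
  fun_prop (disch := first | (left; norm_num; done) | (right; linarith))

lemma incrementPrimitive_eq_mul_add {u : ℝ} (hu : 1 < u) :
    incrementPrimitive a u =
      (u ^ (a + 1) - (u - 1) ^ (a + 1)) * (u ^ a - (u - 1) ^ a) + (u - 1) ^ a * u ^ (a - 1) := by
  have hsplit {x : ℝ} (hx : 0 < x) : x ^ (2 * a + 1) = x ^ (a + 1) * x ^ a := by
    rw [← rpow_add hx]
    ring_nf
  have hu0 : 0 < u := zero_lt_one.trans hu
  have hv0 : 0 < u - 1 := sub_pos.2 hu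
  rw [incrementPrimitive, hsplit hu0, hsplit hv0, rpow_add_one hu0.ne', rpow_add_one hv0.ne',
    rpow_sub_one hu0.ne']
  field_simp
  ring

lemma hasDerivAt_incrementPrimitive {u : ℝ} (hu : 1 < u) :
    HasDerivAt (incrementPrimitive a)
      ((2 * a + 1) * (u ^ a - (u - 1) ^ a) ^ 2 - (1 - a) * ((u - 1) ^ a * u ^ (a - 2))) u := by
  have hu0 : 0 < u := zero_lt_one.trans hu
  have hv0 : 0 < u - 1 := sub_pos.2 hu
  have hdu (p : ℝ) : HasDerivAt (fun u : ℝ ↦ u ^ p) (p * u ^ (p - 1)) u :=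
    hasDerivAt_rpow_const (Or.inl hu0.ne')
  have hdv (p : ℝ) : HasDerivAt (fun u : ℝ ↦ (u - 1) ^ p) (p * (u - 1) ^ (p - 1)) u := by
    simpa using ((hasDerivAt_id u).sub_const 1).rpow_const (p := p) (Or.inl hv0.ne')
  have hlin : HasDerivAt (fun u : ℝ ↦ 2 * u + 1) 2 u := by
    simpa using ((hasDerivAt_id u).const_mul 2).add_const 1
  refine (((hdu (2 * a + 1)).add (hdv (2 * a + 1))).sub
    ((hlin.mul (hdv (a + 1))).mul (hdu (a - 1)))).congr_deriv ?_
  rw [Pi.mul_apply]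
  have hsub_two : u ^ (a - 2) = u ^ a / u ^ 2 := by rw [rpow_sub hu0, rpow_two]
  rw [add_sub_cancel_right, add_sub_cancel_right, sub_sub, one_add_one_eq_two, rpow_two_mul hu0.le,
    rpow_two_mul hv0.le, hsub_two, rpow_add_one hv0.ne', rpow_sub_one hu0.ne']
  field_simp
  ring

lemma tendsto_incrementPrimitive_atTop (ha : a < 1 / 2) :
    Tendsto (incrementPrimitive a) atTop (𝓝 0) := by
  have hdecay : Tendsto (fun u : ℝ ↦ u ^ (2 * a - 1)) atTop (𝓝 0) := by
    simpa using tendsto_rpow_neg_atTop (show 0 < 1 - 2 * a by linarith)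
  have hmul {u : ℝ} (hu : 0 < u) : u ^ a * u ^ (a - 1) = u ^ (2 * a - 1) := by
    rw [← rpow_add hu]
    ring_nf
  have hprod := (isBigO_rpow_sub_sub_rpow_atTop (a + 1) 1).mul (isBigO_rpow_sub_sub_rpow_atTop a 1)
  have hrest := (isBigO_sub_rpow_atTop a 1).mul (isBigO_refl (fun u : ℝ ↦ u ^ (a - 1)) atTop)
  rw [add_sub_cancel_right] at hprod
  refine ((hprod.add hrest).congr' ?_ ?_).trans_tendsto hdecay
  · filter_upwards [eventually_gt_atTop 1] with u hu
    exact (incrementPrimitive_eq_mul_add hu).symm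
  · filter_upwards [eventually_gt_atTop 0] with u hu using hmul hu

theorem integral_sq_rpow_sub_sub_one_rpow (ha : -(1 / 2) < a) (ha' : a < 1 / 2) :
    ∫ u in Ioi (1 : ℝ), (u ^ a - (u - 1) ^ a) ^ 2 =
      ((1 - a) * beta (a + 1) (1 - 2 * a) - 1) / (2 * a + 1) := by
  have hp : 0 < a + 1 := by linarith
  have hq : 0 < 1 - 2 * a := by linarith
  have hexp : (fun u : ℝ ↦ (u - 1) ^ (a + 1 - 1) * u ^ (-(a + 1 + (1 - 2 * a)))) =
      fun u ↦ (u - 1) ^ a * u ^ (a - 2) := by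
    ring_nf
  have hbeta := integral_Ioi_sub_one_rpow_mul_rpow hp hq
  have hkernel := integrableOn_Ioi_sub_one_rpow_mul_rpow hp hq
  rw [hexp] at hbeta hkernel
  have hsq_int := (integrableOn_sq_rpow_sub_sub_one_rpow ha ha').const_mul (2 * a + 1)
  have hbeta_int := hkernel.const_mul (1 - a)
  have hftc := integral_Ioi_of_hasDerivAt_of_tendsto
    (continuousAt_incrementPrimitive_one ha).continuousWithinAt
    (fun u hu ↦ hasDerivAt_incrementPrimitive hu) (hsq_int.sub hbeta_int)
    (tendsto_incrementPrimitive_atTop ha')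
  rw [integral_sub hsq_int hbeta_int, integral_const_mul, integral_const_mul, hbeta,
    incrementPrimitive_one ha] at hftc
  rw [eq_div_iff (by linarith)]
  linear_combination hftc

end Increment

theorem VH_identity (H : ℝ) (hH0 : 0 < H) (hH1 : H < 1) :
    1/(2*H) + ∫ u in Ioi (1:ℝ), (u ^ (H - 1/2) - (u - 1) ^ (H - 1/2))^2 =
      Real.Gamma (H + 1/2)^2 / (2*H * Real.sin (π*H) * Real.Gamma (2*H)) := by
  have hsin : sin (π * H) = cos (π * (H - 1 / 2)) := by
    rw [← cos_sub_pi_div_two]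
    ring_nf
  have ha : -(1 / 2) < H - 1 / 2 := by linarith
  have ha' : H - 1 / 2 < 1 / 2 := by linarith
  rw [integral_sq_rpow_sub_sub_one_rpow ha ha', one_sub_mul_beta_add_one_one_sub_two_mul ha ha',
    ← hsin, show H - 1 / 2 + 1 = H + 1 / 2 by ring, show 2 * (H - 1 / 2) + 1 = 2 * H by ring,
    ← add_div, add_sub_cancel, div_div]
  congr 1
  ring
end

section
/- For H in (0,1), define J(H) = ∫₀^∞ ((u+1)^(H-1/2) - u^(H-1/2))² du. Then J(H) is finite and J(H) + 1/(2H) = Γ(H+1/2)² / (2H sin(πH) Γ(2H)). -/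
open Real MeasureTheory Set

/-!
Put `f u = ((u + 1) ^ a - u ^ a) ^ 2` with `a = H - 1/2`. Integrating by parts, first against `u`
and then to lower the exponent of the remaining product, gives
`P' = (2 * a + 1) * f - (1 - a) * u ^ a * (u + 1) ^ (a - 2)` for an elementary `P` with `P 0 = 1`
and `P → 0` at infinity. The last term is the beta integral `B (a + 1, 1 - 2 * a)` in the variable
`u / (u + 1)`, and the duplication and reflection formulas bring its Gamma factors to the stated
form.
-/

open Filter Topology Asymptotics ProbabilityTheory

section Gamma

/-- At integers `s` both sides are `0`, by the conventions for `Gamma` at its poles and `x / 0`. -/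
lemma Gamma_two_mul_mul_Gamma_two_sub_two_mul (s : ℝ) :
    Gamma (2 * s) * Gamma (2 - 2 * s) = Gamma (s + 1 / 2) * Gamma (3 / 2 - s) / sin (π * s) := by
  have two_rpow_mul : (2 : ℝ) ^ (1 - 2 * s) * 2 ^ (1 - 2 * (1 - s)) = 1 := by
    rw [← rpow_add two_pos]; ring_nf; exact rpow_zero 2
  have duplication := Gamma_mul_Gamma_add_half s
  have duplication' := Gamma_mul_Gamma_add_half (1 - s)
  rw [show 1 - s + 1 / 2 = 3 / 2 - s by ring] at duplication'
  rw [← mul_right_inj' pi_ne_zero]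
  calc π * (Gamma (2 * s) * Gamma (2 - 2 * s))
      = (Gamma (2 * s) * 2 ^ (1 - 2 * s) * √π) *
          (Gamma (2 * (1 - s)) * 2 ^ (1 - 2 * (1 - s)) * √π) := by
        rw [show 2 * (1 - s) = 2 - 2 * s by ring] at two_rpow_mul ⊢
        linear_combination -(Gamma (2 * s) * Gamma (2 - 2 * s)) *
          (√π * √π * two_rpow_mul + mul_self_sqrt pi_nonneg)
    _ = (Gamma s * Gamma (1 - s)) * (Gamma (s + 1 / 2) * Gamma (3 / 2 - s)) := by
        rw [← duplication, ← duplication']; ring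
    _ = π * (Gamma (s + 1 / 2) * Gamma (3 / 2 - s) / sin (π * s)) := by
        rw [Gamma_mul_Gamma_one_sub]; ring

lemma mul_beta_add_half_two_sub_two_mul {s : ℝ} (hs₀ : 0 < s) (hs : s < 3 / 2) :
    (3 / 2 - s) * beta (s + 1 / 2) (2 - 2 * s) =
      Gamma (s + 1 / 2) ^ 2 / (sin (π * s) * Gamma (2 * s)) := by
  have hs' : 0 < 3 / 2 - s := sub_pos.2 hs
  have Gamma_succ : Gamma (s + 1 / 2 + (2 - 2 * s)) = (3 / 2 - s) * Gamma (3 / 2 - s) := by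
    rw [← Gamma_add_one hs'.ne']; ring_nf
  have hΓ : Gamma (2 * s) ≠ 0 := (Gamma_pos_of_pos (by positivity)).ne'
  have hΓ' : Gamma (3 / 2 - s) ≠ 0 := (Gamma_pos_of_pos hs').ne'
  have Gamma_ratio : Gamma (2 - 2 * s) / Gamma (3 / 2 - s) =
      Gamma (s + 1 / 2) / sin (π * s) / Gamma (2 * s) :=
    eq_div_of_mul_eq hΓ <| by
      rw [div_mul_eq_mul_div, div_eq_iff hΓ', mul_comm, Gamma_two_mul_mul_Gamma_two_sub_two_mul]
      ring
  rw [beta, Gamma_succ, ← mul_div_assoc, mul_div_mul_left _ _ hs'.ne', mul_div_assoc, Gamma_ratio,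
    div_div]
  ring

end Gamma

section Beta

variable {p q : ℝ}

lemma integral_Ioo_rpow_mul_one_sub_rpow (hp : 0 < p) (hq : 0 < q) :
    ∫ x in Ioo (0 : ℝ) 1, x ^ (p - 1) * (1 - x) ^ (q - 1) = beta p q := by
  rw [← Complex.ofReal_inj, ← integral_complex_ofReal, beta]
  push_cast
  rw [← Complex.Gamma_ofReal, ← Complex.Gamma_ofReal, ← Complex.Gamma_ofReal, Complex.ofReal_add,
    ← Complex.betaIntegral_eq_Gamma_mul_div _ _ (by simpa) (by simpa), Complex.betaIntegral,
    intervalIntegral.integral_of_le zero_le_one, integral_Ioc_eq_integral_Ioo]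
  refine setIntegral_congr_fun measurableSet_Ioo fun x hx => ?_
  simp only [Complex.ofReal_cpow hx.1.le, Complex.ofReal_cpow (sub_nonneg.2 hx.2.le)]
  push_cast
  rfl

lemma image_div_add_one_Ioi : (fun u : ℝ => u / (u + 1)) '' Ioi 0 = Ioo 0 1 := by
  ext t
  constructor
  · rintro ⟨u, hu : 0 < u, rfl⟩
    exact ⟨by positivity, (div_lt_one (by positivity)).2 (lt_add_one u)⟩
  · rintro ⟨ht₀, ht₁⟩
    have : 1 - t ≠ 0 := (sub_pos.2 ht₁).ne'
    refine ⟨t / (1 - t), div_pos ht₀ (sub_pos.2 ht₁), ?_⟩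
    field_simp
    ring

lemma hasDerivAt_div_add_one {u : ℝ} (hu : u + 1 ≠ 0) :
    HasDerivAt (fun u : ℝ => u / (u + 1)) (((u + 1) ^ 2)⁻¹) u := by
  refine ((hasDerivAt_id u).fun_div ((hasDerivAt_id u).add_const 1) hu).congr_deriv ?_
  simp

lemma monotoneOn_div_add_one : MonotoneOn (fun u : ℝ => u / (u + 1)) (Ioi 0) := by
  intro u (hu : 0 < u) v (hv : 0 < v) huv
  exact (div_le_div_iff₀ (by positivity) (by positivity)).2 (by linarith)

lemma integral_Ioi_rpow_mul_add_one_rpow (hp : 0 < p) (hq : 0 < q) :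
    ∫ u in Ioi (0 : ℝ), u ^ (p - 1) * (u + 1) ^ (-(p + q)) = beta p q := by
  rw [← integral_Ioo_rpow_mul_one_sub_rpow hp hq, ← image_div_add_one_Ioi,
    integral_image_eq_integral_deriv_smul_of_monotoneOn measurableSet_Ioi
      (fun u (hu : 0 < u) => (hasDerivAt_div_add_one (by positivity)).hasDerivWithinAt)
      monotoneOn_div_add_one]
  refine setIntegral_congr_fun measurableSet_Ioi fun u (hu : 0 < u) => ?_
  have hu₁ : 0 < u + 1 := by positivity
  have one_sub : 1 - u / (u + 1) = (u + 1)⁻¹ := by field_simp; ring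
  simp only [smul_eq_mul, one_sub, div_rpow hu.le hu₁.le, inv_rpow hu₁.le, rpow_neg hu₁.le,
    rpow_add hu₁, rpow_sub hu₁, rpow_one]
  field_simp

lemma integrableOn_Ioi_rpow_mul_add_one_rpow (hp : 0 < p) (hq : 0 < q) :
    IntegrableOn (fun u : ℝ => u ^ (p - 1) * (u + 1) ^ (-(p + q))) (Ioi 0) :=
  .of_integral_ne_zero <| by
    rw [integral_Ioi_rpow_mul_add_one_rpow hp hq]
    exact (beta_pos hp hq).ne'

end Beta

section Increment

lemma isBigO_add_rpow_sub_rpow (h p : ℝ) :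
    (fun u : ℝ => (u + h) ^ p - u ^ p) =O[atTop] fun u => u ^ (p - 1) := by
  have deriv_at_zero : HasDerivAt (fun t : ℝ => (1 + h * t) ^ p) (h * p) 0 := by
    simpa using (((hasDerivAt_id (0 : ℝ)).const_mul h).const_add 1).rpow_const (p := p) (by simp)
  have linear := deriv_at_zero.isBigO_sub.comp_tendsto tendsto_inv_atTop_zero
  refine ((isBigO_refl (fun u : ℝ => u ^ p) atTop).mul linear).congr' ?_ ?_
  · filter_upwards [eventually_gt_atTop 0, eventually_gt_atTop (-h)] with u hu huh
    have factor : 1 + h * u⁻¹ = (u + h) / u := by field_simp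
    have : u ^ p ≠ 0 := (rpow_pos_of_pos hu p).ne'
    simp only [Function.comp_apply, factor, div_rpow (show 0 ≤ u + h by linarith) hu.le, mul_zero,
      add_zero, one_rpow]
    field_simp
  · filter_upwards [eventually_gt_atTop 0] with u hu
    simp [rpow_sub hu, div_eq_mul_inv]

lemma isBigO_add_rpow (h p : ℝ) : (fun u : ℝ => (u + h) ^ p) =O[atTop] fun u => u ^ p := by
  have lower : (fun u : ℝ => u ^ (p - 1)) =O[atTop] fun u => u ^ p :=
    .of_norm_eventuallyLE <| by
      filter_upwards [eventually_ge_atTop 1] with u hu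
      rw [norm_of_nonneg (by positivity)]
      exact rpow_le_rpow_of_exponent_le hu (by linarith)
  simpa using ((isBigO_add_rpow_sub_rpow h p).trans lower).add (isBigO_refl _ _)

lemma isBigO_sq_add_rpow_sub_rpow (h p : ℝ) :
    (fun u : ℝ => ((u + h) ^ p - u ^ p) ^ 2) =O[atTop] fun u => u ^ (2 * p - 2) := by
  refine ((isBigO_add_rpow_sub_rpow h p).pow 2).congr' .rfl ?_
  filter_upwards [eventually_gt_atTop 0] with u hu
  rw [← rpow_mul_natCast hu.le]
  ring_nf

lemma isBigO_nhdsGT_zero_sq_add_rpow_sub_rpow {h : ℝ} (hh : 0 < h) (p : ℝ) :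
    (fun u : ℝ => ((u + h) ^ p - u ^ p) ^ 2) =O[𝓝[>] 0] fun u => u ^ (2 * min 0 p) := by
  have shifted_bounded : (fun u : ℝ => (u + h) ^ p) =O[𝓝[>] 0] fun _ => (1 : ℝ) := by
    have : ContinuousAt (fun u : ℝ => (u + h) ^ p) 0 := by
      fun_prop (disch := simp [hh.ne'])
    exact (this.tendsto.mono_left nhdsWithin_le_nhds).isBigO_one ℝ
  have rpow_mono {r : ℝ} (hr : min 0 p ≤ r) :
      (fun u : ℝ => u ^ r) =O[𝓝[>] 0] fun u => u ^ min 0 p :=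
    .of_norm_eventuallyLE <| by
      filter_upwards [Ioc_mem_nhdsGT one_pos] with u hu
      rw [norm_of_nonneg (rpow_nonneg hu.1.le _)]
      exact rpow_le_rpow_of_exponent_ge hu.1 hu.2 hr
  have one_le := rpow_mono (min_le_left 0 p)
  simp only [rpow_zero] at one_le
  refine (((shifted_bounded.trans one_le).sub (rpow_mono (min_le_right 0 p))).pow 2).congr' .rfl ?_
  filter_upwards [self_mem_nhdsWithin] with u (hu : 0 < u)
  rw [← rpow_mul_natCast hu.le, mul_comm]
  rfl

lemma integrableOn_Ioi_sq_add_rpow_sub_rpow {h p : ℝ} (hh : 0 < h) (hp₀ : -(1 / 2) < p)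
    (hp : p < 1 / 2) : IntegrableOn (fun u : ℝ => ((u + h) ^ p - u ^ p) ^ 2) (Ioi 0) := by
  have continuous : ContinuousOn (fun u : ℝ => ((u + h) ^ p - u ^ p) ^ 2) (Ioi 0) := by
    intro u (hu : 0 < u)
    have : u + h ≠ 0 := by positivity
    have : ContinuousAt (fun u : ℝ => ((u + h) ^ p - u ^ p) ^ 2) u := by
      fun_prop (disch := simp [*, hu.ne'])
    exact this.continuousWithinAt
  have min_gt : -(1 / 2) < min 0 p := lt_min (by norm_num) hp₀
  simpa using mellin_convergent_of_isBigO_scalar (s := 1) (a := 2 - 2 * p) (b := -(2 * min 0 p))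
    (continuous.locallyIntegrableOn measurableSet_Ioi)
    (by simpa using isBigO_sq_add_rpow_sub_rpow h p) (by linarith)
    (by simpa using isBigO_nhdsGT_zero_sq_add_rpow_sub_rpow hh p) (by linarith)

end Increment

section BoundaryTerm

/-- The boundary term `P` produced by integrating `((u + 1) ^ a - u ^ a) ^ 2` by parts: the first
summand comes from integrating against `u`, the second from the remaining integral of
`2 * a * ((u + 1) ^ a - u ^ a) * (u + 1) ^ (a - 1)`. -/
noncomputable def boundaryTerm (a u : ℝ) : ℝ :=
  u * ((u + 1) ^ a - u ^ a) ^ 2 + (u + 1) ^ (a - 1) * ((u + 1) ^ (a + 1) - u ^ (a + 1))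

variable {a : ℝ}

lemma boundaryTerm_zero (ha : -1 < a) : boundaryTerm a 0 = 1 := by
  simp [boundaryTerm, zero_rpow (show a + 1 ≠ 0 by linarith)]

lemma hasDerivAt_boundaryTerm (a : ℝ) {u : ℝ} (hu : 0 < u) :
    HasDerivAt (boundaryTerm a)
      ((2 * a + 1) * ((u + 1) ^ a - u ^ a) ^ 2 - (1 - a) * (u ^ a * (u + 1) ^ (a - 2))) u := by
  have hu₁ : 0 < u + 1 := by positivity
  have deriv_rpow (r : ℝ) : HasDerivAt (fun u : ℝ => u ^ r) (r * u ^ (r - 1)) u :=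
    hasDerivAt_rpow_const (.inl hu.ne')
  have deriv_shift (r : ℝ) : HasDerivAt (fun u : ℝ => (u + 1) ^ r) (r * (u + 1) ^ (r - 1)) u := by
    simpa using ((hasDerivAt_id u).add_const 1).rpow_const (p := r) (.inl hu₁.ne')
  refine (((hasDerivAt_id u).mul (((deriv_shift a).sub (deriv_rpow a)).pow 2)).add
    ((deriv_shift (a - 1)).mul ((deriv_shift (a + 1)).sub (deriv_rpow (a + 1))))).congr_deriv ?_
  simp only [rpow_add hu, rpow_add hu₁, rpow_sub hu, rpow_sub hu₁, rpow_one, rpow_two, id,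
    Pi.sub_apply, Pi.pow_apply]
  field_simp
  ring

/-- The factor `u` has to be absorbed into the square because `u ^ a` may blow up at `0`. -/
lemma continuousWithinAt_boundaryTerm_zero (ha : -(1 / 2) < a) :
    ContinuousWithinAt (boundaryTerm a) (Ici 0) 0 := by
  have absorb : EqOn (boundaryTerm a) (fun u => (√u * (u + 1) ^ a - u ^ (a + 1 / 2)) ^ 2 +
      (u + 1) ^ (a - 1) * ((u + 1) ^ (a + 1) - u ^ (a + 1))) (Ici 0) := by
    intro u (hu : 0 ≤ u)
    have split_rpow : u ^ (a + 1 / 2) = u ^ a * √u := by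
      rw [rpow_add' hu (by linarith), sqrt_eq_rpow]
    simp only [boundaryTerm, split_rpow]
    linear_combination -((u + 1) ^ a - u ^ a) ^ 2 * sq_sqrt hu
  refine ContinuousWithinAt.congr (ContinuousAt.continuousWithinAt ?_) absorb (absorb self_mem_Ici)
  have : 0 ≤ a + 1 / 2 := by linarith
  have : 0 ≤ a + 1 := by linarith
  fun_prop (disch := simp [*])

lemma tendsto_boundaryTerm_atTop (ha : a < 1 / 2) : Tendsto (boundaryTerm a) atTop (𝓝 0) := by
  have decay : (boundaryTerm a) =O[atTop] fun u => u ^ (-(1 - 2 * a)) := by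
    refine .add ?_ ?_
    · refine ((isBigO_refl id atTop).mul (isBigO_sq_add_rpow_sub_rpow 1 a)).congr' .rfl ?_
      filter_upwards [eventually_gt_atTop 0] with u hu
      rw [id, ← rpow_one_add' hu.le (by linarith)]
      ring_nf
    · refine ((isBigO_add_rpow 1 (a - 1)).mul (isBigO_add_rpow_sub_rpow 1 (a + 1))).congr' .rfl ?_
      filter_upwards [eventually_gt_atTop 0] with u hu
      rw [← rpow_add hu]
      ring_nf
  exact decay.trans_tendsto (tendsto_rpow_neg_atTop (by linarith))

end BoundaryTerm

lemma mul_integral_Ioi_sq_add_one_rpow_sub_rpow {a : ℝ} (ha₀ : -(1 / 2) < a) (ha : a < 1 / 2) :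
    (2 * a + 1) * ∫ u in Ioi (0 : ℝ), ((u + 1) ^ a - u ^ a) ^ 2 =
      (1 - a) * beta (a + 1) (1 - 2 * a) - 1 := by
  have hp : 0 < a + 1 := by linarith
  have hq : 0 < 1 - 2 * a := by linarith
  have int_sq := (integrableOn_Ioi_sq_add_rpow_sub_rpow one_pos ha₀ ha).const_mul (2 * a + 1)
  have int_beta := (integrableOn_Ioi_rpow_mul_add_one_rpow hp hq).const_mul (1 - a)
  have integral_beta := integral_Ioi_rpow_mul_add_one_rpow hp hq
  rw [show a + 1 - 1 = a by ring, show -(a + 1 + (1 - 2 * a)) = a - 2 by ring]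
    at int_beta integral_beta
  have ftc := integral_Ioi_of_hasDerivAt_of_tendsto (continuousWithinAt_boundaryTerm_zero ha₀)
    (fun u hu => hasDerivAt_boundaryTerm a hu) (int_sq.sub int_beta) (tendsto_boundaryTerm_atTop ha)
  rw [integral_sub int_sq int_beta, integral_const_mul, integral_const_mul, integral_beta,
    boundaryTerm_zero (by linarith)] at ftc
  linarith

theorem J_finite_and_identity (H : ℝ) (hH0 : 0 < H) (hH1 : H < 1) :
    IntegrableOn (fun u : ℝ => ((u+1) ^ (H - 1/2) - u ^ (H - 1/2))^2) (Ioi 0) ∧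
    (∫ u in Ioi (0:ℝ), ((u+1) ^ (H - 1/2) - u ^ (H - 1/2))^2) + 1/(2*H) =
      Real.Gamma (H + 1/2)^2 / (2*H * Real.sin (π*H) * Real.Gamma (2*H)) := by
  have ha₀ : -(1 / 2) < H - 1 / 2 := by linarith
  have ha : H - 1 / 2 < 1 / 2 := by linarith
  refine ⟨integrableOn_Ioi_sq_add_rpow_sub_rpow one_pos ha₀ ha, ?_⟩
  have hJ := mul_integral_Ioi_sq_add_one_rpow_sub_rpow ha₀ ha
  rw [show 2 * (H - 1 / 2) + 1 = 2 * H by ring, show 1 - (H - 1 / 2) = 3 / 2 - H by ring,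
    show H - 1 / 2 + 1 = H + 1 / 2 by ring, show 1 - 2 * (H - 1 / 2) = 2 - 2 * H by ring,
    mul_beta_add_half_two_sub_two_mul hH0 (by linarith)] at hJ
  rw [mul_assoc (2 * H), div_mul_eq_div_div_swap (Gamma _ ^ 2), eq_add_of_sub_eq hJ.symm]
  field_simp
end
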